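/- Let i_n : G_n → G_{n+1} (n ∈ ℕ) be injective open continuous groupoid homomorphisms between étale groupoids with locally compact Hausdorff unit spaces. Then the topological inductive limit G = colim_n G_n, equipped with the pointwise-defined multiplication, is an étale groupoid with locally compact Hausdorff unit space, and the canonical maps ι^n : G_n → G are injective open continuous groupoid homomorphisms. -/

import Mathlib

open Topology

/-- A topological groupoid: a set with a partially defined multiplication
(`D a b` expresses composability), an inversion, satisfying the groupoid
axioms, such that inversion is continuous and multiplication is continuous
on the set of composable pairs. -/
structure TopGroupoid (G : Type*) [TopologicalSpace G] where
  /-- composability -/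
  D : G → G → Prop
  /-- partially defined multiplication (junk values off `D`) -/
  comp : G → G → G
  /-- inversion -/
  inv : G → G
  inv_inv : ∀ g, inv (inv g) = g
  d_inv : ∀ g, D g (inv g)
  d_eq : ∀ a b, D a b ↔ comp (inv a) a = comp b (inv b)
  d_comp_left : ∀ {a b c}, D a b → D b c → D (comp a b) c
  d_comp_right : ∀ {a b c}, D a b → D b c → D a (comp b c)
  assoc : ∀ {a b c}, D a b → D b c → comp (comp a b) c = comp a (comp b c)
  cancel_left : ∀ {g h}, D g h → comp (inv g) (comp g h) = h
  cancel_right : ∀ {g h}, D g h → comp (comp g h) (inv h) = g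
  continuous_inv : Continuous inv
  continuousOn_comp : ContinuousOn (fun p : G × G => comp p.1 p.2) {p | D p.1 p.2}

namespace TopGroupoid

variable {G : Type*} [TopologicalSpace G]

/-- The source map `s(γ) = γ⁻¹γ`. -/
def src (S : TopGroupoid G) (g : G) : G := S.comp (S.inv g) g

/-- The range map `r(γ) = γγ⁻¹`. -/
def rng (S : TopGroupoid G) (g : G) : G := S.comp g (S.inv g)

/-- The unit space `G⁽⁰⁾ = {γ⁻¹γ : γ ∈ G}`. -/
def unitSpace (S : TopGroupoid G) : Set G := Set.range S.src

/-- A groupoid is étale if its range map is a local homeomorphism. -/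
def IsEtale (S : TopGroupoid G) : Prop := IsLocalHomeomorph S.rng

/-- An open bisection: an open set on which both the source and the range map
are injective (hence, in an étale groupoid, restrict to homeomorphisms onto
their open images). -/
def IsOpenBisection (S : TopGroupoid G) (U : Set G) : Prop :=
  IsOpen U ∧ Set.InjOn S.src U ∧ Set.InjOn S.rng U

/-- Pointwise product of subsets: `U·V = {γη : γ ∈ U, η ∈ V, s γ = r η}`. -/
def setMul (S : TopGroupoid G) (U V : Set G) : Set G :=
  {g | ∃ a ∈ U, ∃ b ∈ V, S.D a b ∧ g = S.comp a b}

/-- Pointwise inverse of a subset: `U⁻¹ = {γ⁻¹ : γ ∈ U}`. -/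
def setInv (S : TopGroupoid G) (U : Set G) : Set G := S.inv '' U

end TopGroupoid

/-- An actor `G ↷ H`: a continuous left action of `G` on `H` (with anchor map
`ρ : H → G⁽⁰⁾`) which commutes with the right multiplication of `H` on itself. -/
structure Actor {G : Type*} {H : Type*} [TopologicalSpace G] [TopologicalSpace H]
    (S : TopGroupoid G) (T : TopGroupoid H) where
  /-- the anchor map -/
  rho : H → G
  /-- the action multiplication, partially defined (junk off `s γ = ρ x`) -/
  act : G → H → H
  rho_mem : ∀ x, rho x ∈ S.unitSpace
  continuous_rho : Continuous rho
  continuousOn_act :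
    ContinuousOn (fun p : G × H => act p.1 p.2) {p | S.src p.1 = rho p.2}
  rho_act : ∀ {γ x}, S.src γ = rho x → rho (act γ x) = S.rng γ
  act_assoc : ∀ {γ₁ γ₂ x}, S.D γ₁ γ₂ → S.src γ₂ = rho x →
      act γ₁ (act γ₂ x) = act (S.comp γ₁ γ₂) x
  act_unit : ∀ x, act (rho x) x = x
  rho_comp : ∀ {x y}, T.D x y → rho (T.comp x y) = rho x
  src_act : ∀ {γ x}, S.src γ = rho x → T.src (act γ x) = T.src x
  act_right : ∀ {γ x y}, S.src γ = rho x → T.D x y →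
      act γ (T.comp x y) = T.comp (act γ x) y

namespace Actor

variable {G H : Type*} [TopologicalSpace G] [TopologicalSpace H]
variable {S : TopGroupoid G} {T : TopGroupoid H}

/-- An actor is free if the only arrows fixing a unit are units. -/
def Free (A : Actor S T) : Prop :=
  ∀ t ∈ T.unitSpace, ∀ γ : G, S.src γ = A.rho t → A.act γ t = t → γ ∈ S.unitSpace

/-- An actor is proper if the anchor map restricted to the unit space of `H`
is a proper map. -/
def Proper (A : Actor S T) : Prop := IsProperMap (T.unitSpace.restrict A.rho)

/-- `U·V = {γ·x : γ ∈ U, x ∈ V, s γ = ρ x}`. -/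
def actSet (A : Actor S T) (U : Set G) (V : Set H) : Set H :=
  {y | ∃ γ ∈ U, ∃ x ∈ V, S.src γ = A.rho x ∧ y = A.act γ x}

end Actor

/-- The relation generating the inductive limit identifications:
each element is identified with its image at the next stage. -/
def colimRel {G : ℕ → Type*} (i : ∀ n, G n → G (n + 1)) :
    (Σ n, G n) → (Σ n, G n) → Prop :=
  fun x y => (⟨x.1 + 1, i x.1 x.2⟩ : Σ n, G n) = y

/-- The topological inductive limit of the system `(G n, i n)`, with the
quotient topology of the disjoint union. -/
abbrev Colim {G : ℕ → Type*} [∀ n, TopologicalSpace (G n)]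
    (i : ∀ n, G n → G (n + 1)) : Type _ :=
  Quot (colimRel i)

/-- The canonical map `G n → colim G`. -/
def colimMk {G : ℕ → Type*} [∀ n, TopologicalSpace (G n)]
    (i : ∀ n, G n → G (n + 1)) (n : ℕ) (a : G n) : Colim i :=
  Quot.mk (colimRel i) ⟨n, a⟩

/-!
Since the connecting maps are injective, two elements of a common stage are identified in the
colimit only if they are equal; since they are moreover open embeddings, every stage embeds in the
colimit as an open subset. Any finite set of elements of the colimit lies in one of these subsets.
Hence each groupoid axiom, and each local property (continuity of the operations, étaleness,
separation of two units, compact neighbourhoods of a unit), can be verified inside a single stage.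
-/

namespace TopGroupoid

variable {G H K : Type*} [TopologicalSpace G] [TopologicalSpace H] [TopologicalSpace K]

theorem inv_d (S : TopGroupoid G) (g : G) : S.D (S.inv g) g := by
  simpa only [S.inv_inv] using S.d_inv (S.inv g)

theorem src_src (S : TopGroupoid G) (g : G) : S.src (S.src g) = S.src g := by
  have h : S.src (S.src g) = S.rng (S.inv g) :=
    (S.d_eq _ _).1 (S.d_comp_left (S.inv_d g) (S.d_inv g))
  rwa [rng, S.inv_inv] at h

theorem mem_unitSpace_iff (S : TopGroupoid G) {u : G} : u ∈ S.unitSpace ↔ S.src u = u :=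
  ⟨by rintro ⟨g, rfl⟩; exact S.src_src g, fun h => ⟨u, h⟩⟩

/-- A homomorphism of groupoids, as a condition on a bare map: it preserves composability, products
and inverses. Continuity is not part of the definition. -/
structure IsHom (S : TopGroupoid G) (T : TopGroupoid H) (f : G → H) : Prop where
  map_d : ∀ {a b}, S.D a b → T.D (f a) (f b)
  map_comp : ∀ {a b}, S.D a b → f (S.comp a b) = T.comp (f a) (f b)
  map_inv : ∀ a, f (S.inv a) = T.inv (f a)

namespace IsHom

variable {S : TopGroupoid G} {T : TopGroupoid H} {R : TopGroupoid K} {f : G → H} {g : H → K}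

theorem id (S : TopGroupoid G) : S.IsHom S id :=
  ⟨fun h => h, fun _ => rfl, fun _ => rfl⟩

theorem comp (hg : T.IsHom R g) (hf : S.IsHom T f) : S.IsHom R (g ∘ f) where
  map_d h := hg.map_d (hf.map_d h)
  map_comp h := (congrArg g (hf.map_comp h)).trans (hg.map_comp (hf.map_d h))
  map_inv a := (congrArg g (hf.map_inv a)).trans (hg.map_inv (f a))

theorem map_src (hf : S.IsHom T f) (a : G) : f (S.src a) = T.src (f a) := by
  rw [src, src, hf.map_comp (S.inv_d a), hf.map_inv]

theorem map_rng (hf : S.IsHom T f) (a : G) : f (S.rng a) = T.rng (f a) := by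
  rw [rng, rng, hf.map_comp (S.d_inv a), hf.map_inv]

theorem d_iff (hf : S.IsHom T f) (hinj : Function.Injective f) {a b : G} :
    T.D (f a) (f b) ↔ S.D a b := by
  refine ⟨fun h => (S.d_eq a b).2 (hinj ?_), hf.map_d⟩
  calc
    f (S.src a) = T.src (f a) := hf.map_src a
    _ = T.rng (f b) := (T.d_eq _ _).1 h
    _ = f (S.rng b) := (hf.map_rng b).symm

theorem preimage_unitSpace (hf : S.IsHom T f) (hinj : Function.Injective f) :
    f ⁻¹' T.unitSpace = S.unitSpace := by
  ext a
  rw [Set.mem_preimage, mem_unitSpace_iff, mem_unitSpace_iff, ← hf.map_src, hinj.eq_iff]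

end IsHom

end TopGroupoid

section Transition

variable {G : ℕ → Type*} {n m k : ℕ}

/-- The composite `i (m - 1) ∘ ⋯ ∘ i n : G n → G m` of connecting maps of a sequence. -/
def transition (i : ∀ n, G n → G (n + 1)) (h : n ≤ m) : G n → G m :=
  Nat.leRecOn h fun {k} => i k

theorem transition_self (i : ∀ n, G n → G (n + 1)) (n : ℕ) : transition i (le_refl n) = id :=
  funext fun a => Nat.leRecOn_self a

theorem transition_succ (i : ∀ n, G n → G (n + 1)) (h : n ≤ m) :
    transition i (Nat.le_succ_of_le h) = i m ∘ transition i h :=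
  funext fun a => Nat.leRecOn_succ h a

theorem transition_transition (i : ∀ n, G n → G (n + 1)) (hnm : n ≤ m) (hmk : m ≤ k) (a : G n) :
    transition i hmk (transition i hnm a) = transition i (hnm.trans hmk) a :=
  (Nat.leRecOn_trans hnm hmk a).symm

variable {i : ∀ n, G n → G (n + 1)}

theorem injective_transition (hinj : ∀ n, Function.Injective (i n)) (h : n ≤ m) :
    Function.Injective (transition i h) :=
  Nat.leRecOn_injective h _ fun n => hinj n

theorem exists_transition_eq_of_eqvGen {x y : Σ n, G n}
    (h : Relation.EqvGen (colimRel i) x y) :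
    ∃ k, ∃ (hx : x.1 ≤ k) (hy : y.1 ≤ k), transition i hx x.2 = transition i hy y.2 := by
  induction h with
  | rel x _ h =>
    obtain rfl := h
    refine ⟨x.1 + 1, x.1.le_succ, le_rfl, ?_⟩
    rw [transition_succ i le_rfl, transition_self, transition_self, Function.comp_id, id]
  | refl x => exact ⟨x.1, le_rfl, le_rfl, rfl⟩
  | symm _ _ _ ih =>
    obtain ⟨k, hx, hy, h⟩ := ih
    exact ⟨k, hy, hx, h.symm⟩
  | trans x y z _ _ ih₁ ih₂ =>
    obtain ⟨k, hx, hy, hxy⟩ := ih₁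
    obtain ⟨l, hy', hz, hyz⟩ := ih₂
    refine ⟨max k l, hx.trans (le_max_left k l), hz.trans (le_max_right k l), ?_⟩
    rw [← transition_transition i hx (le_max_left k l), hxy, transition_transition,
      ← transition_transition i hz (le_max_right k l), ← hyz, transition_transition]

variable [∀ n, TopologicalSpace (G n)]

theorem isOpenEmbedding_transition (hi : ∀ n, IsOpenEmbedding (i n)) (h : n ≤ m) :
    IsOpenEmbedding (transition i h) := by
  induction m, h using Nat.le_induction with
  | base => exact transition_self i n ▸ .id
  | succ m h ih => exact transition_succ i h ▸ (hi m).comp ih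

theorem isHom_transition {S : ∀ n, TopGroupoid (G n)}
    (hS : ∀ n, (S n).IsHom (S (n + 1)) (i n)) (h : n ≤ m) :
    (S n).IsHom (S m) (transition i h) := by
  induction m, h using Nat.le_induction with
  | base => exact transition_self i n ▸ .id (S n)
  | succ m h ih => exact transition_succ i h ▸ (hS m).comp ih

end Transition

section ColimSpace

variable {G : ℕ → Type*} [∀ n, TopologicalSpace (G n)] {i : ∀ n, G n → G (n + 1)} {n m k : ℕ}

theorem colimMk_succ (i : ∀ n, G n → G (n + 1)) (n : ℕ) (a : G n) :
    colimMk i (n + 1) (i n a) = colimMk i n a :=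
  (Quot.sound (r := colimRel i) (a := ⟨n, a⟩) rfl).symm

theorem colimMk_transition (i : ∀ n, G n → G (n + 1)) (h : n ≤ m) (a : G n) :
    colimMk i m (transition i h a) = colimMk i n a := by
  induction m, h using Nat.le_induction with
  | base => rw [transition_self, id]
  | succ m h ih => rw [transition_succ i h, Function.comp_apply, colimMk_succ, ih]

theorem eventually_mem_range_colimMk (x : Colim i) :
    ∀ᶠ n in Filter.atTop, x ∈ Set.range (colimMk i n) := by
  obtain ⟨⟨n, a⟩, rfl⟩ := Quot.exists_rep x
  filter_upwards [Filter.eventually_ge_atTop n] with m h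
  exact ⟨transition i h a, colimMk_transition i h a⟩

theorem exists_colimMk_eq₂ (x y : Colim i) :
    ∃ n a b, colimMk i n a = x ∧ colimMk i n b = y := by
  obtain ⟨n, ⟨a, ha⟩, ⟨b, hb⟩⟩ :=
    ((eventually_mem_range_colimMk x).and (eventually_mem_range_colimMk y)).exists
  exact ⟨n, a, b, ha, hb⟩

theorem exists_colimMk_eq₃ (x y z : Colim i) :
    ∃ n a b c, colimMk i n a = x ∧ colimMk i n b = y ∧ colimMk i n c = z := by
  obtain ⟨n, ⟨a, ha⟩, ⟨b, hb⟩, ⟨c, hc⟩⟩ := ((eventually_mem_range_colimMk x).and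
    ((eventually_mem_range_colimMk y).and (eventually_mem_range_colimMk z))).exists
  exact ⟨n, a, b, c, ha, hb, hc⟩

theorem colimMk_eq_colimMk_iff {a : G n} {b : G m} :
    colimMk i n a = colimMk i m b ↔
      ∃ k, ∃ (hn : n ≤ k) (hm : m ≤ k), transition i hn a = transition i hm b := by
  refine ⟨fun h => exists_transition_eq_of_eqvGen (Quot.eqvGen_exact h), ?_⟩
  rintro ⟨k, hn, hm, h⟩
  rw [← colimMk_transition i hn, h, colimMk_transition]

theorem injective_colimMk (hinj : ∀ n, Function.Injective (i n)) (n : ℕ) :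
    Function.Injective (colimMk i n) := by
  intro a b h
  obtain ⟨k, hn, _, hab⟩ := colimMk_eq_colimMk_iff.1 h
  exact injective_transition hinj hn hab

theorem transition_eq_of_colimMk_eq (hinj : ∀ n, Function.Injective (i n)) {a : G n} {b : G m}
    (h : colimMk i n a = colimMk i m b) (hn : n ≤ k) (hm : m ≤ k) :
    transition i hn a = transition i hm b :=
  injective_colimMk hinj k (by rw [colimMk_transition, colimMk_transition, h])

theorem continuous_colimMk (i : ∀ n, G n → G (n + 1)) (n : ℕ) : Continuous (colimMk i n) :=
  continuous_quot_mk.comp continuous_sigmaMk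

theorem preimage_colimMk_image_colimMk (hinj : ∀ n, Function.Injective (i n)) (hn : n ≤ k)
    (hm : m ≤ k) (U : Set (G n)) :
    colimMk i m ⁻¹' (colimMk i n '' U) = transition i hm ⁻¹' (transition i hn '' U) := by
  have hU : colimMk i n '' U = colimMk i k '' (transition i hn '' U) := by
    simp only [Set.image_image, colimMk_transition]
  ext a
  rw [Set.mem_preimage, hU, ← colimMk_transition i hm, (injective_colimMk hinj k).mem_set_image,
    Set.mem_preimage]

theorem isOpenMap_colimMk (hi : ∀ n, IsOpenEmbedding (i n)) (n : ℕ) :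
    IsOpenMap (colimMk i n) := by
  intro U hU
  rw [← isQuotientMap_quot_mk.isOpen_preimage, isOpen_sigma_iff]
  intro m
  change IsOpen (colimMk i m ⁻¹' (colimMk i n '' U))
  rw [preimage_colimMk_image_colimMk (fun n => (hi n).injective) (le_max_left n m)
    (le_max_right n m)]
  exact ((isOpenEmbedding_transition hi _).isOpenMap U hU).preimage
    (isOpenEmbedding_transition hi _).continuous

theorem isOpenEmbedding_colimMk (hi : ∀ n, IsOpenEmbedding (i n)) (n : ℕ) :
    IsOpenEmbedding (colimMk i n) :=
  .of_continuous_injective_isOpenMap (continuous_colimMk i n)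
    (injective_colimMk (fun n => (hi n).injective) n) (isOpenMap_colimMk hi n)

theorem isLocalHomeomorph_of_comp_colimMk {Y : Type*} [TopologicalSpace Y]
    (hi : ∀ n, IsOpenEmbedding (i n)) {f : Colim i → Y}
    (hf : ∀ n, IsLocalHomeomorph (f ∘ colimMk i n)) : IsLocalHomeomorph f := by
  rw [isLocalHomeomorph_iff_isLocalHomeomorphOn_univ]
  rintro ⟨n, a⟩ -
  exact (hf n).isLocalHomeomorphOn.of_comp_right (s := Set.univ)
    (isOpenEmbedding_colimMk hi n).isLocalHomeomorph.isLocalHomeomorphOn _ ⟨a, trivial, rfl⟩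

theorem t2Space_of_preimage_colimMk (hi : ∀ n, IsOpenEmbedding (i n)) {A : Set (Colim i)}
    (hA : ∀ n, T2Space (colimMk i n ⁻¹' A)) : T2Space A := by
  refine ⟨fun ⟨x, hx⟩ ⟨y, hy⟩ hxy => ?_⟩
  obtain ⟨n, a, b, rfl, rfl⟩ := exists_colimMk_eq₂ x y
  have hab : (⟨a, hx⟩ : colimMk i n ⁻¹' A) ≠ ⟨b, hy⟩ :=
    ne_of_apply_ne (A.restrictPreimage (colimMk i n)) hxy
  exact separated_by_isOpenEmbedding ((isOpenEmbedding_colimMk hi n).restrictPreimage A) hab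

theorem locallyCompactSpace_of_preimage_colimMk (hi : ∀ n, IsOpenEmbedding (i n))
    {A : Set (Colim i)} (hA : ∀ n, LocallyCompactSpace (colimMk i n ⁻¹' A)) :
    LocallyCompactSpace A := by
  refine ⟨fun ⟨x, hx⟩ W hW => ?_⟩
  obtain ⟨⟨n, a⟩, rfl⟩ := Quot.exists_rep x
  have he := (isOpenEmbedding_colimMk hi n).restrictPreimage A
  obtain ⟨K, hK, hKW, hKc⟩ :=
    local_compact_nhds (he.continuous.continuousAt (x := ⟨a, hx⟩) hW)
  exact ⟨_, he.isOpenMap.image_mem_nhds hK, Set.image_subset_iff.2 hKW, hKc.image he.continuous⟩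

end ColimSpace

section ColimGroupoid

open TopGroupoid

variable {G : ℕ → Type*} [∀ n, TopologicalSpace (G n)] {S : ∀ n, TopGroupoid (G n)}
  {i : ∀ n, G n → G (n + 1)} {n m : ℕ}

/-- Composability in the inductive limit: there are composable representatives at some common
stage. -/
def ColimD (S : ∀ n, TopGroupoid (G n)) (i : ∀ n, G n → G (n + 1)) (x y : Colim i) : Prop :=
  ∃ n a b, colimMk i n a = x ∧ colimMk i n b = y ∧ (S n).D a b

/-- Multiplication in the inductive limit: the class of the product of any two composable
representatives. The value is arbitrary on pairs that are not composable. -/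
noncomputable def colimComp (S : ∀ n, TopGroupoid (G n)) (i : ∀ n, G n → G (n + 1))
    (x y : Colim i) : Colim i :=
  @Classical.epsilon _ ⟨x⟩ fun z =>
    ∃ n a b, colimMk i n a = x ∧ colimMk i n b = y ∧ (S n).D a b ∧
      colimMk i n ((S n).comp a b) = z

/-- Inversion in the inductive limit, computed on representatives. -/
def colimInv (hS : ∀ n, (S n).IsHom (S (n + 1)) (i n)) : Colim i → Colim i :=
  Quot.lift (fun x => colimMk i x.1 ((S x.1).inv x.2)) <| by
    rintro ⟨n, a⟩ _ rfl
    simp only [← (hS n).map_inv, colimMk_succ]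

theorem d_iff_of_colimMk_eq (hS : ∀ n, (S n).IsHom (S (n + 1)) (i n))
    (hinj : ∀ n, Function.Injective (i n)) {a b : G n} {a' b' : G m}
    (ha : colimMk i n a = colimMk i m a') (hb : colimMk i n b = colimMk i m b') :
    (S n).D a b ↔ (S m).D a' b' := by
  have hn := le_max_left n m
  have hm := le_max_right n m
  rw [← (isHom_transition hS hn).d_iff (injective_transition hinj hn),
    transition_eq_of_colimMk_eq hinj ha hn hm, transition_eq_of_colimMk_eq hinj hb hn hm,
    (isHom_transition hS hm).d_iff (injective_transition hinj hm)]

theorem colimMk_comp_eq_of_colimMk_eq (hS : ∀ n, (S n).IsHom (S (n + 1)) (i n))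
    (hinj : ∀ n, Function.Injective (i n)) {a b : G n} {a' b' : G m}
    (ha : colimMk i n a = colimMk i m a') (hb : colimMk i n b = colimMk i m b')
    (h : (S n).D a b) :
    colimMk i n ((S n).comp a b) = colimMk i m ((S m).comp a' b') := by
  have hn := le_max_left n m
  have hm := le_max_right n m
  have h' : (S m).D a' b' := (d_iff_of_colimMk_eq hS hinj ha hb).1 h
  rw [← colimMk_transition i hn, ← colimMk_transition i hm, (isHom_transition hS hn).map_comp h,
    (isHom_transition hS hm).map_comp h', transition_eq_of_colimMk_eq hinj ha hn hm,
    transition_eq_of_colimMk_eq hinj hb hn hm]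

theorem colimD_mk (hS : ∀ n, (S n).IsHom (S (n + 1)) (i n))
    (hinj : ∀ n, Function.Injective (i n)) {a b : G n} :
    ColimD S i (colimMk i n a) (colimMk i n b) ↔ (S n).D a b :=
  ⟨fun ⟨_, _, _, ha, hb, h⟩ => (d_iff_of_colimMk_eq hS hinj ha hb).1 h,
    fun h => ⟨n, a, b, rfl, rfl, h⟩⟩

theorem colimComp_mk (hS : ∀ n, (S n).IsHom (S (n + 1)) (i n))
    (hinj : ∀ n, Function.Injective (i n)) {a b : G n} (h : (S n).D a b) :
    colimComp S i (colimMk i n a) (colimMk i n b) = colimMk i n ((S n).comp a b) := by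
  obtain ⟨m, a', b', ha, hb, h', hz⟩ := Classical.epsilon_spec
    (p := fun z => ∃ m a' b', colimMk i m a' = colimMk i n a ∧ colimMk i m b' = colimMk i n b ∧
      (S m).D a' b' ∧ colimMk i m ((S m).comp a' b') = z)
    ⟨_, n, a, b, rfl, rfl, h, rfl⟩
  exact hz.symm.trans (colimMk_comp_eq_of_colimMk_eq hS hinj ha hb h')

theorem colimInv_mk (hS : ∀ n, (S n).IsHom (S (n + 1)) (i n)) (a : G n) :
    colimInv hS (colimMk i n a) = colimMk i n ((S n).inv a) :=
  rfl

theorem continuous_colimInv (hS : ∀ n, (S n).IsHom (S (n + 1)) (i n)) :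
    Continuous (colimInv hS) :=
  continuous_quot_lift _ <| continuous_sigma fun n =>
    (continuous_colimMk i n).comp (S n).continuous_inv

theorem continuousOn_colimComp (hS : ∀ n, (S n).IsHom (S (n + 1)) (i n))
    (hi : ∀ n, IsOpenEmbedding (i n)) :
    ContinuousOn (fun p : Colim i × Colim i => colimComp S i p.1 p.2)
      {p | ColimD S i p.1 p.2} := by
  rintro ⟨x, y⟩ hxy
  obtain ⟨n, a, b, rfl, rfl⟩ := exists_colimMk_eq₂ x y
  have hinj := fun n => (hi n).injective
  have hab : (S n).D a b := (colimD_mk hS hinj).1 hxy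
  have he := (isOpenEmbedding_colimMk hi n).prodMap (isOpenEmbedding_colimMk hi n)
  have hpre : Prod.map (colimMk i n) (colimMk i n) ⁻¹' {p | ColimD S i p.1 p.2} =
      {p | (S n).D p.1 p.2} :=
    Set.ext fun _ => colimD_mk hS hinj
  have hstage : ContinuousWithinAt (fun p : G n × G n => colimMk i n ((S n).comp p.1 p.2))
      {p | (S n).D p.1 p.2} (a, b) :=
    (continuous_colimMk i n).continuousAt.comp_continuousWithinAt ((S n).continuousOn_comp _ hab)
  change Filter.Tendsto _ (𝓝[_] (Prod.map (colimMk i n) (colimMk i n) (a, b)))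
    (𝓝 (colimComp S i (colimMk i n a) (colimMk i n b)))
  rw [← he.map_nhdsWithin_preimage_eq, hpre, Filter.tendsto_map'_iff, colimComp_mk hS hinj hab]
  exact hstage.congr' (eventually_nhdsWithin_of_forall fun _ hp => (colimComp_mk hS hinj hp).symm)

/-- The inductive limit of a sequence of topological groupoids whose connecting homomorphisms are
open embeddings. -/
noncomputable def colimGroupoid (hS : ∀ n, (S n).IsHom (S (n + 1)) (i n))
    (hi : ∀ n, IsOpenEmbedding (i n)) : TopGroupoid (Colim i) :=
  have hinj := fun n => (hi n).injective
  { D := ColimD S i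
    comp := colimComp S i
    inv := colimInv hS
    inv_inv := by
      rintro ⟨n, a⟩
      exact congrArg (colimMk i n) ((S n).inv_inv a)
    d_inv := by
      rintro ⟨n, a⟩
      exact (colimD_mk hS hinj).2 ((S n).d_inv a)
    d_eq := by
      intro x y
      obtain ⟨n, a, b, rfl, rfl⟩ := exists_colimMk_eq₂ x y
      rw [colimD_mk hS hinj, colimInv_mk, colimInv_mk, colimComp_mk hS hinj ((S n).inv_d a),
        colimComp_mk hS hinj ((S n).d_inv b), (injective_colimMk hinj n).eq_iff, (S n).d_eq]
    d_comp_left := by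
      intro x y z
      obtain ⟨n, a, b, c, rfl, rfl, rfl⟩ := exists_colimMk_eq₃ x y z
      rw [colimD_mk hS hinj, colimD_mk hS hinj]
      intro hab hbc
      rw [colimComp_mk hS hinj hab, colimD_mk hS hinj]
      exact (S n).d_comp_left hab hbc
    d_comp_right := by
      intro x y z
      obtain ⟨n, a, b, c, rfl, rfl, rfl⟩ := exists_colimMk_eq₃ x y z
      rw [colimD_mk hS hinj, colimD_mk hS hinj]
      intro hab hbc
      rw [colimComp_mk hS hinj hbc, colimD_mk hS hinj]
      exact (S n).d_comp_right hab hbc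
    assoc := by
      intro x y z
      obtain ⟨n, a, b, c, rfl, rfl, rfl⟩ := exists_colimMk_eq₃ x y z
      rw [colimD_mk hS hinj, colimD_mk hS hinj]
      intro hab hbc
      rw [colimComp_mk hS hinj hab, colimComp_mk hS hinj hbc,
        colimComp_mk hS hinj ((S n).d_comp_left hab hbc),
        colimComp_mk hS hinj ((S n).d_comp_right hab hbc), (S n).assoc hab hbc]
    cancel_left := by
      intro x y
      obtain ⟨n, a, b, rfl, rfl⟩ := exists_colimMk_eq₂ x y
      rw [colimD_mk hS hinj]
      intro hab
      rw [colimInv_mk, colimComp_mk hS hinj hab,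
        colimComp_mk hS hinj ((S n).d_comp_right ((S n).inv_d a) hab), (S n).cancel_left hab]
    cancel_right := by
      intro x y
      obtain ⟨n, a, b, rfl, rfl⟩ := exists_colimMk_eq₂ x y
      rw [colimD_mk hS hinj]
      intro hab
      rw [colimInv_mk, colimComp_mk hS hinj hab,
        colimComp_mk hS hinj ((S n).d_comp_left hab ((S n).d_inv b)), (S n).cancel_right hab]
    continuous_inv := continuous_colimInv hS
    continuousOn_comp := continuousOn_colimComp hS hi }

theorem isHom_colimMk (hS : ∀ n, (S n).IsHom (S (n + 1)) (i n))
    (hi : ∀ n, IsOpenEmbedding (i n)) (n : ℕ) :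
    (S n).IsHom (colimGroupoid hS hi) (colimMk i n) where
  map_d := (colimD_mk hS fun n => (hi n).injective).2
  map_comp h := (colimComp_mk hS (fun n => (hi n).injective) h).symm
  map_inv a := (colimInv_mk hS a).symm

theorem isEtale_colimGroupoid (hS : ∀ n, (S n).IsHom (S (n + 1)) (i n))
    (hi : ∀ n, IsOpenEmbedding (i n)) (hetale : ∀ n, (S n).IsEtale) :
    (colimGroupoid hS hi).IsEtale := by
  refine isLocalHomeomorph_of_comp_colimMk hi fun n => ?_
  have hrng : (colimGroupoid hS hi).rng ∘ colimMk i n = colimMk i n ∘ (S n).rng :=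
    funext fun a => ((isHom_colimMk hS hi n).map_rng a).symm
  exact hrng ▸ (isOpenEmbedding_colimMk hi n).isLocalHomeomorph.comp (hetale n)

theorem preimage_colimMk_unitSpace (hS : ∀ n, (S n).IsHom (S (n + 1)) (i n))
    (hi : ∀ n, IsOpenEmbedding (i n)) (n : ℕ) :
    colimMk i n ⁻¹' (colimGroupoid hS hi).unitSpace = (S n).unitSpace :=
  (isHom_colimMk hS hi n).preimage_unitSpace (isOpenEmbedding_colimMk hi n).injective

theorem t2Space_unitSpace_colimGroupoid (hS : ∀ n, (S n).IsHom (S (n + 1)) (i n))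
    (hi : ∀ n, IsOpenEmbedding (i n)) (hT2 : ∀ n, T2Space (S n).unitSpace) :
    T2Space (colimGroupoid hS hi).unitSpace :=
  t2Space_of_preimage_colimMk hi fun n => (preimage_colimMk_unitSpace hS hi n).symm ▸ hT2 n

theorem locallyCompactSpace_unitSpace_colimGroupoid (hS : ∀ n, (S n).IsHom (S (n + 1)) (i n))
    (hi : ∀ n, IsOpenEmbedding (i n)) (hLC : ∀ n, LocallyCompactSpace (S n).unitSpace) :
    LocallyCompactSpace (colimGroupoid hS hi).unitSpace :=
  locallyCompactSpace_of_preimage_colimMk hi fun n =>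
    (preimage_colimMk_unitSpace hS hi n).symm ▸ hLC n

end ColimGroupoid

/-- Given injective open continuous groupoid homomorphisms
`i n : G n → G (n+1)` between étale groupoids with locally compact Hausdorff
unit spaces, the topological inductive limit with the pointwise-defined
operations is an étale groupoid with locally compact Hausdorff unit space,
and the canonical maps are injective open continuous groupoid homomorphisms. -/
theorem inductive_limit_groupoid {G : ℕ → Type*} [∀ n, TopologicalSpace (G n)]
    (S : ∀ n, TopGroupoid (G n)) (i : ∀ n, G n → G (n + 1))
    (hinj : ∀ n, Function.Injective (i n))
    (hcont : ∀ n, Continuous (i n))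
    (hopen : ∀ n, IsOpenMap (i n))
    (hD : ∀ n (a b : G n), (S n).D a b ↔ (S (n + 1)).D (i n a) (i n b))
    (hcomp : ∀ n (a b : G n), (S n).D a b →
      i n ((S n).comp a b) = (S (n + 1)).comp (i n a) (i n b))
    (hinv : ∀ n (a : G n), i n ((S n).inv a) = (S (n + 1)).inv (i n a))
    (hetale : ∀ n, (S n).IsEtale)
    (hT2 : ∀ n, T2Space ((S n).unitSpace))
    (hLC : ∀ n, LocallyCompactSpace ((S n).unitSpace)) :
    ∃ Q : TopGroupoid (Colim i),
      -- the groupoid operations are defined pointwise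
      (∀ n (a b : G n), (S n).D a b ↔ Q.D (colimMk i n a) (colimMk i n b)) ∧
      (∀ n (a b : G n), (S n).D a b →
        Q.comp (colimMk i n a) (colimMk i n b) = colimMk i n ((S n).comp a b)) ∧
      (∀ n (a : G n), Q.inv (colimMk i n a) = colimMk i n ((S n).inv a)) ∧
      -- the colimit is an étale groupoid with locally compact Hausdorff unit space
      Q.IsEtale ∧ T2Space Q.unitSpace ∧ LocallyCompactSpace Q.unitSpace ∧
      -- the canonical maps are injective open continuous (groupoid homomorphisms,
      -- by the pointwise compatibility above)
      (∀ n, Function.Injective (colimMk i n)) ∧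
      (∀ n, Continuous (colimMk i n)) ∧
      (∀ n, IsOpenMap (colimMk i n)) := by
  have hS : ∀ n, (S n).IsHom (S (n + 1)) (i n) := fun n =>
    ⟨(hD n _ _).1, hcomp n _ _, hinv n⟩
  have hi : ∀ n, IsOpenEmbedding (i n) := fun n =>
    .of_continuous_injective_isOpenMap (hcont n) (hinj n) (hopen n)
  have hmk := isHom_colimMk hS hi
  have hemb := isOpenEmbedding_colimMk hi
  exact ⟨colimGroupoid hS hi, fun n _ _ => ((hmk n).d_iff (hemb n).injective).symm,
    fun n _ _ h => ((hmk n).map_comp h).symm, fun n a => ((hmk n).map_inv a).symm,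
    isEtale_colimGroupoid hS hi hetale, t2Space_unitSpace_colimGroupoid hS hi hT2,
    locallyCompactSpace_unitSpace_colimGroupoid hS hi hLC, fun n => (hemb n).injective,
    fun n => (hemb n).continuous, fun n => (hemb n).isOpenMap⟩
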